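/- Fix n ≥ 1 and complex numbers z₁,…,zₙ, z′₁,…,z′ₙ, f, g, f′, g′ such that f and g are linearly independent over ℝ. Define L = {(a₁,…,aₙ) ∈ ℤⁿ : there exist b, c ∈ ℤ with Σᵢ aᵢ·zᵢ = b·f + c·g} and L^sing = {(a₁,…,aₙ) ∈ ℤⁿ : there exist b, c ∈ ℤ with Σᵢ aᵢ·zᵢ = b·f + c·g and Σᵢ aᵢ·z′ᵢ = b·f′ + c·g′}. If the ℚ-vector subspaces of ℚⁿ spanned by L^sing and by L have the same dimension (i.e., the lattices L^sing and L have the same rank), then L^sing = L. -/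

import Mathlib

open Complex Finset

/-!
Over `ℚ` the two lattices span the same space, so every `a ∈ L` has a nonzero multiple `m • a` in
`L^sing`. The independence of the periods makes the coefficients of a relation unique, so the
coefficients witnessing `m • a ∈ L^sing` are `m` times those witnessing `a ∈ L`; dividing the
relation between the derivatives by `m` gives `a ∈ L^sing`.
-/

section Localization

variable {R S M N : Type*} [CommRing R] [AddCommGroup M] [Module R M] [AddCommGroup N] [Module R N]
  (p : Submonoid R) (φ : M →ₗ[R] N) [IsLocalizedModule p φ]

theorem exists_smul_mem_of_map_mem_span [CommRing S] [Algebra R S] [IsLocalization p S] [Module S N]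
    [IsScalarTower R S N] {P : Submodule R M} {x : M} (hx : φ x ∈ Submodule.span S (φ '' P)) :
    ∃ m ∈ p, m • x ∈ P := by
  rw [← Submodule.localized'_eq_span S p φ P, Submodule.mem_localized'] at hx
  obtain ⟨y, hy, s, hyx⟩ := hx
  rw [← IsLocalizedModule.mk'_one p φ x, IsLocalizedModule.mk'_eq_mk'_iff] at hyx
  obtain ⟨t, ht⟩ := hyx
  refine ⟨t * s, mul_mem t.2 s.2, ?_⟩
  rw [one_smul] at ht
  rw [mul_smul]
  exact ht ▸ P.smul_mem t hy

theorem exists_smul_mem_of_le_of_rank_span_eq [Field S] [Algebra R S] [IsLocalization p S]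
    [Module S N] [IsScalarTower R S N] [Module.Finite S N] {P Q : Submodule R M} (hPQ : P ≤ Q)
    (hrank : Module.rank S (Submodule.span S (φ '' P)) = Module.rank S (Submodule.span S (φ '' Q)))
    {x : M} (hx : x ∈ Q) : ∃ m ∈ p, m • x ∈ P := by
  have hspan : Submodule.span S (φ '' P) = Submodule.span S (φ '' Q) :=
    Submodule.eq_of_le_of_finrank_eq (Submodule.span_mono (Set.image_mono hPQ))
      (congrArg Cardinal.toNat hrank)
  apply exists_smul_mem_of_map_mem_span (S := S) p φ
  rw [hspan]
  exact Submodule.subset_span (Set.mem_image_of_mem φ hx)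

end Localization

section Relations

variable (R : Type*) {ι κ V W : Type*} [CommRing R] [AddCommGroup V] [Module R V]
  [AddCommGroup W] [Module R W]

/-- The module of `R`-linear relations among the points `z i` modulo the periods `ω k`: the
coefficient vectors `a` for which `∑ i, a i • z i` is an `R`-linear combination of the `ω k`. For
`R = ℤ` and two complex periods this is the lattice `L`. -/
def relationModule [Fintype ι] (z : ι → V) (ω : κ → V) : Submodule R (ι → R) :=
  (Submodule.span R (Set.range ω)).comap (Fintype.linearCombination R z)

/-- The module of singular (tangential) relations, for which the derivatives `z'` and `ω'` satisfy
the same relation as `z` and `ω`, with the same coefficients. It is encoded as the relation module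
of the pairs `(z i, z' i)` modulo the pairs `(ω k, ω' k)`; for `R = ℤ` and two complex periods this
is the lattice `L^sing`. -/
def singularRelationModule [Fintype ι] (z : ι → V) (z' : ι → W) (ω : κ → V) (ω' : κ → W) :
    Submodule R (ι → R) :=
  relationModule R (fun i => (z i, z' i)) (fun k => (ω k, ω' k))

variable {R}

theorem mem_span_range_prodMk_iff {ω : κ → V} {ω' : κ → W} {v : V} {w : W} :
    (v, w) ∈ Submodule.span R (Set.range fun k => (ω k, ω' k)) ↔
      ∃ b : κ →₀ R, Finsupp.linearCombination R ω b = v ∧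
        Finsupp.linearCombination R ω' b = w := by
  have hpair (b : κ →₀ R) : Finsupp.linearCombination R (fun k => (ω k, ω' k)) b =
      (Finsupp.linearCombination R ω b, Finsupp.linearCombination R ω' b) :=
    Prod.ext (Finsupp.apply_linearCombination R (LinearMap.fst R V W) _ b)
      (Finsupp.apply_linearCombination R (LinearMap.snd R V W) _ b)
  simp only [← Finsupp.range_linearCombination, LinearMap.mem_range, hpair, Prod.mk.injEq]

theorem mem_span_range_prodMk_of_smul_mem [IsDomain R] [Module.IsTorsionFree R W] {ω : κ → V}
    {ω' : κ → W} (hω : LinearIndependent R ω) {m : R} (hm : m ≠ 0) {v : V} {w : W}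
    (hv : v ∈ Submodule.span R (Set.range ω))
    (hvw : m • (v, w) ∈ Submodule.span R (Set.range fun k => (ω k, ω' k))) :
    (v, w) ∈ Submodule.span R (Set.range fun k => (ω k, ω' k)) := by
  rw [← Finsupp.range_linearCombination] at hv
  obtain ⟨b, hbv⟩ := hv
  obtain ⟨c, hcv, hcw⟩ := mem_span_range_prodMk_iff.mp hvw
  have hcb : c = m • b := hω (by rw [hcv, map_smul, hbv])
  have hbw : m • Finsupp.linearCombination R ω' b = m • w := by rw [← map_smul, ← hcb, hcw]
  exact mem_span_range_prodMk_iff.mpr ⟨b, hbv, smul_right_injective W hm hbw⟩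

variable [Fintype ι] {z : ι → V} {z' : ι → W} {ω : κ → V} {ω' : κ → W} {a : ι → R}

theorem mem_relationModule_iff :
    a ∈ relationModule R z ω ↔ ∑ i, a i • z i ∈ Submodule.span R (Set.range ω) :=
  Iff.rfl

theorem mem_singularRelationModule_iff :
    a ∈ singularRelationModule R z z' ω ω' ↔
      (∑ i, a i • z i, ∑ i, a i • z' i) ∈ Submodule.span R (Set.range fun k => (ω k, ω' k)) := by
  simp only [singularRelationModule, mem_relationModule_iff, Prod.smul_mk, prod_mk_sum]

theorem singularRelationModule_le_relationModule :
    singularRelationModule R z z' ω ω' ≤ relationModule R z ω := by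
  intro a ha
  obtain ⟨b, hb, -⟩ := mem_span_range_prodMk_iff.mp (mem_singularRelationModule_iff.mp ha)
  rw [mem_relationModule_iff, ← Finsupp.range_linearCombination]
  exact ⟨b, hb⟩

theorem mem_singularRelationModule_of_smul_mem [IsDomain R] [Module.IsTorsionFree R W]
    (hω : LinearIndependent R ω) {m : R} (hm : m ≠ 0) (ha : a ∈ relationModule R z ω)
    (hma : m • a ∈ singularRelationModule R z z' ω ω') :
    a ∈ singularRelationModule R z z' ω ω' := by
  rw [mem_singularRelationModule_iff] at hma ⊢
  refine mem_span_range_prodMk_of_smul_mem hω hm ha ?_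
  simpa only [Pi.smul_apply, smul_assoc, ← Finset.smul_sum, Prod.smul_mk] using hma

theorem singular_relations_eq_of_rank_eq_general (K : Type*) [IsDomain R] [Field K] [Algebra R K]
    [IsFractionRing R K] [Module.IsTorsionFree R W] (hω : LinearIndependent R ω)
    (hrank : Module.rank K (Submodule.span K
        ((fun (a : ι → R) (i : ι) => algebraMap R K (a i)) ''
          (singularRelationModule R z z' ω ω' : Set (ι → R)))) =
      Module.rank K (Submodule.span K
        ((fun (a : ι → R) (i : ι) => algebraMap R K (a i)) ''
          (relationModule R z ω : Set (ι → R))))) :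
    singularRelationModule R z z' ω ω' = relationModule R z ω := by
  refine le_antisymm singularRelationModule_le_relationModule fun a ha => ?_
  obtain ⟨m, hm, hma⟩ := exists_smul_mem_of_le_of_rank_span_eq (nonZeroDivisors R)
    (LinearMap.pi fun i => Algebra.linearMap R K ∘ₗ LinearMap.proj i)
    singularRelationModule_le_relationModule hrank ha
  exact mem_singularRelationModule_of_smul_mem hω (nonZeroDivisors.ne_zero hm) ha hma

end Relations

section PeriodPair

variable {ι A : Type*} [Fintype ι] [Ring A] (z z' : ι → A) (f g f' g' : A)

theorem coe_relationModule_int_pair :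
    (relationModule ℤ z ![f, g] : Set (ι → ℤ)) =
      {a | ∃ b c : ℤ, ∑ i, (a i : A) * z i = (b : A) * f + (c : A) * g} := by
  ext a
  simp [mem_relationModule_iff, Set.pair_comm g f, Submodule.mem_span_pair, eq_comm]

theorem coe_singularRelationModule_int_pair :
    (singularRelationModule ℤ z z' ![f, g] ![f', g'] : Set (ι → ℤ)) =
      {a | ∃ b c : ℤ, ∑ i, (a i : A) * z i = (b : A) * f + (c : A) * g ∧
        ∑ i, (a i : A) * z' i = (b : A) * f' + (c : A) * g'} := by
  ext a
  simp [mem_singularRelationModule_iff, Submodule.mem_span_range_iff_exists_fun,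
    Fin.exists_fin_succ_pi, eq_comm]

end PeriodPair

theorem linearIndependent_int_pair_of_real {f g : ℂ}
    (hindep : ∀ s t : ℝ, (s : ℂ) * f + (t : ℂ) * g = 0 → s = 0 ∧ t = 0) :
    LinearIndependent ℤ ![f, g] :=
  LinearIndependent.restrict_scalars' (K := ℝ) ℤ
    (LinearIndependent.pair_iff.mpr (by simpa only [real_smul] using hindep))

/-- If the lattices `L` of integral relations and `L^sing` of singular (tangential) relations
have the same rank (the `ℚ`-spans of their images in `ℚⁿ` have the same dimension), then
`L^sing = L`. -/
theorem singular_relations_eq_of_rank_eq (n : ℕ) (hn : 1 ≤ n)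
    (z z' : Fin n → ℂ) (f g f' g' : ℂ)
    (hindep : ∀ s t : ℝ, (s : ℂ) * f + (t : ℂ) * g = 0 → s = 0 ∧ t = 0)
    (L Lsing : Set (Fin n → ℤ))
    (hL : L = {a | ∃ b c : ℤ, ∑ i, (a i : ℂ) * z i = (b : ℂ) * f + (c : ℂ) * g})
    (hLsing : Lsing = {a | ∃ b c : ℤ,
        ∑ i, (a i : ℂ) * z i = (b : ℂ) * f + (c : ℂ) * g ∧
        ∑ i, (a i : ℂ) * z' i = (b : ℂ) * f' + (c : ℂ) * g'})
    (hrank : Module.rank ℚ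
        (Submodule.span ℚ ((fun (a : Fin n → ℤ) (i : Fin n) => (a i : ℚ)) '' Lsing)) =
      Module.rank ℚ
        (Submodule.span ℚ ((fun (a : Fin n → ℤ) (i : Fin n) => (a i : ℚ)) '' L))) :
    Lsing = L := by
  rw [hL, hLsing, ← coe_relationModule_int_pair, ← coe_singularRelationModule_int_pair] at hrank ⊢
  exact congrArg SetLike.coe
    (singular_relations_eq_of_rank_eq_general ℚ (linearIndependent_int_pair_of_real hindep) hrank)
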